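/- Let d ≥ 2, c > 0 and κ ≥ 1, and define K_{κ,λ}(t,x) = ∫_{ℝ^d} e^{i(t|ξ| + x·ξ)} ζ̃_{κ,λ}(ξ) dξ. There exists a constant C > 0 such that sup_{x∈ℝ^d} |K_{κ,λ}(t,x)| ≤ C (t/λ)^{−(d−1)/2} for all λ ∈ ℕ with λ ≥ κ + 1 and all t ≥ cλ. -/

import Mathlib

open MeasureTheory Complex
open scoped RealInnerProductSpace ENNReal
open scoped ContDiff FourierTransform Real SchwartzMap

/-!
Subordinate the radial symbol to Gaussians: put `l = λ`, `μ = t / l`, and write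
`e^{it|ξ|} ζ(|ξ| - l) = e^{-(l⁻² - it/(2l)) |ξ|²} h(|ξ|²)`, where `h` is smooth and supported where
`|√y - l| ≤ κ`. Fourier inversion for `h`, Fubini and the explicit Gaussian integral give, uniformly
in `x`, `|K(t, x)| ≤ ∫ |ĥ(w)| (π / |l⁻² - is|)^{d/2} dw` with `s = t/(2l) + 2πw`.

* Where `|s| ≥ μ/8` the weight is at most `(8π/μ)^{d/2}`, while `‖ĥ‖_{L¹} = O(√μ)` by Bernstein's
  inequality: the support of `h` has length `4lκ`, `h` is bounded, and `h' = O(t/l²)` because the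
  phase of `h` is stationary at the centre `y = l²`. The product is `O(μ^{-(d-1)/2})`.
* Where `|s| ≤ μ/8` the weight is only bounded by `(πl²)^{d/2}`, but `ĥ(w)` is an oscillatory
  integral without stationary points, so it is `O(l t^{-(d+1)})`. These `w` form an interval of
  length `μ/(8π)` and contribute `O(μ^{-d})`, which suffices because `μ ≥ c`.
-/

section BernsteinInequality

lemma deriv_eq_zero_of_forall_notMem_eq_zero {𝕜 E : Type*} [NontriviallyNormedField 𝕜]
    [NormedAddCommGroup E] [NormedSpace 𝕜 E] {S : Set 𝕜} (hS : IsClosed S) {f : 𝕜 → E}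
    (hf : ∀ u ∉ S, f u = 0) {u : 𝕜} (hu : u ∉ S) : deriv f u = 0 :=
  deriv_of_notMem_tsupport fun hmem ↦
    hu (closure_minimal (Function.support_subset_iff'.2 hf) hS hmem)

lemma integral_norm_sq_le_of_forall_notMem_eq_zero {E : Type*} [NormedAddCommGroup E]
    {f : ℝ → E} {a b B : ℝ} (hab : a ≤ b) (hf : ∀ y ∉ Set.Icc a b, f y = 0)
    (hB : ∀ y ∈ Set.Icc a b, ‖f y‖ ≤ B) : ∫ y, ‖f y‖ ^ 2 ≤ B ^ 2 * (b - a) := by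
  rw [← setIntegral_eq_integral_of_forall_compl_eq_zero (s := Set.Icc a b)
    fun y hy ↦ by simp [hf y hy], ← Real.volume_real_Icc_of_le hab]
  refine (Real.le_norm_self _).trans
    (norm_setIntegral_le_of_norm_le_const measure_Icc_lt_top fun y hy ↦ ?_)
  rw [norm_pow, norm_norm]
  gcongr
  exact hB y hy

lemma exists_forall_norm_le_and_norm_deriv_le {E : Type*} [NormedAddCommGroup E]
    [NormedSpace ℝ E] {f : ℝ → E} (hf : ContDiff ℝ 1 f) (hf_supp : HasCompactSupport f) :
    ∃ M, ∀ s, ‖f s‖ ≤ M ∧ ‖deriv f s‖ ≤ M := by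
  obtain ⟨M₀, hM₀⟩ := hf_supp.exists_bound_of_continuous hf.continuous
  obtain ⟨M₁, hM₁⟩ := hf_supp.deriv.exists_bound_of_continuous hf.continuous_deriv_one
  exact ⟨max M₀ M₁, fun s ↦ ⟨(hM₀ s).trans (le_max_left _ _), (hM₁ s).trans (le_max_right _ _)⟩⟩

variable {F : Type*} [NormedAddCommGroup F] [InnerProductSpace ℂ F]

lemma sq_integral_mul_le {α : Type*} [MeasurableSpace α] {μ : Measure α} {f g : α → ℝ}
    (hf₀ : 0 ≤ f) (hg₀ : 0 ≤ g) (hf : MemLp f 2 μ) (hg : MemLp g 2 μ) :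
    (∫ x, f x * g x ∂μ) ^ 2 ≤ (∫ x, f x ^ 2 ∂μ) * ∫ x, g x ^ 2 ∂μ := by
  have holder := integral_mul_le_Lp_mul_Lq_of_nonneg Real.HolderConjugate.two_two (μ := μ)
    (.of_forall hf₀) (.of_forall hg₀) (by simpa using hf) (by simpa using hg)
  simp only [Real.rpow_two, ← Real.sqrt_eq_rpow] at holder
  have hnonneg : 0 ≤ ∫ x, f x * g x ∂μ := integral_nonneg fun x ↦ mul_nonneg (hf₀ x) (hg₀ x)
  calc (∫ x, f x * g x ∂μ) ^ 2
      ≤ (√(∫ x, f x ^ 2 ∂μ) * √(∫ x, g x ^ 2 ∂μ)) ^ 2 := by gcongr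
    _ = (∫ x, f x ^ 2 ∂μ) * ∫ x, g x ^ 2 ∂μ := by
      rw [mul_pow, Real.sq_sqrt (integral_nonneg fun _ ↦ sq_nonneg _),
        Real.sq_sqrt (integral_nonneg fun _ ↦ sq_nonneg _)]

lemma norm_fourier_derivCLM_sq (h : 𝓢(ℝ, F)) (w : ℝ) :
    ‖𝓕 (SchwartzMap.derivCLM ℂ F h) w‖ ^ 2 = (2 * π * w) ^ 2 * ‖𝓕 h w‖ ^ 2 := by
  have hderiv : (SchwartzMap.derivCLM ℂ F h : ℝ → F) = deriv h :=
    funext (SchwartzMap.derivCLM_apply ℂ h)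
  have hint : Integrable (deriv h) := hderiv ▸ (SchwartzMap.derivCLM ℂ F h).integrable
  rw [SchwartzMap.fourier_coe, SchwartzMap.fourier_coe, hderiv,
    Real.fourier_deriv h.integrable h.differentiable hint, norm_smul, mul_pow]
  simp [mul_pow]

variable [CompleteSpace F]

lemma integral_one_add_sq_mul_norm_sq_fourier (h : 𝓢(ℝ, F)) (a : ℝ) :
    Integrable (fun w ↦ (1 + (2 * π * w / a) ^ 2) * ‖𝓕 h w‖ ^ 2) ∧
      ∫ w, (1 + (2 * π * w / a) ^ 2) * ‖𝓕 h w‖ ^ 2 =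
        (∫ y, ‖h y‖ ^ 2) + (a ^ 2)⁻¹ * ∫ y, ‖deriv h y‖ ^ 2 := by
  set h' := SchwartzMap.derivCLM ℂ F h
  have hint (f : 𝓢(ℝ, F)) : Integrable fun w ↦ ‖f w‖ ^ 2 :=
    (memLp_two_iff_integrable_sq_norm f.continuous.aestronglyMeasurable).1 (f.memLp 2)
  have hsplit (w : ℝ) : (1 + (2 * π * w / a) ^ 2) * ‖𝓕 h w‖ ^ 2 =
      ‖𝓕 h w‖ ^ 2 + (a ^ 2)⁻¹ * ‖𝓕 h' w‖ ^ 2 := by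
    rw [norm_fourier_derivCLM_sq]; ring
  simp only [hsplit]
  refine ⟨(hint _).add ((hint _).const_mul _), ?_⟩
  rw [integral_add (hint _) ((hint _).const_mul _), integral_const_mul,
    SchwartzMap.integral_norm_sq_fourier, SchwartzMap.integral_norm_sq_fourier]
  rfl

/-- Bernstein's inequality: Cauchy–Schwarz with the weight `1 + (2πw/a)²`, and Plancherel for `h`
and `h'`. -/
lemma sq_integral_norm_fourier_le (h : 𝓢(ℝ, F)) {a : ℝ} (ha : 0 < a) :
    (∫ w, ‖𝓕 h w‖) ^ 2 ≤ (a * (∫ y, ‖h y‖ ^ 2) + a⁻¹ * ∫ y, ‖deriv h y‖ ^ 2) / 2 := by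
  set P : ℝ → ℝ := fun w ↦ 1 + (2 * π * w / a) ^ 2
  have hP (w : ℝ) : 0 < P w := by positivity
  have hP_scale (w : ℝ) : (P w)⁻¹ = (1 + (w / (a / (2 * π))) ^ 2)⁻¹ := by
    simp only [P]; congr 3; field_simp
  have hP_int : Integrable fun w ↦ (P w)⁻¹ := by
    simp only [hP_scale]
    exact integrable_inv_one_add_sq.comp_div (by positivity)
  have hP_integral : ∫ w, (P w)⁻¹ = a / 2 := by
    simp only [hP_scale]
    rw [Measure.integral_comp_div (fun w : ℝ ↦ (1 + w ^ 2)⁻¹), integral_univ_inv_one_add_sq,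
      abs_of_pos (by positivity), smul_eq_mul]
    field_simp
  obtain ⟨hPh_int, hPh_integral⟩ := integral_one_add_sq_mul_norm_sq_fourier h a
  have hP_cont : Continuous P := by fun_prop
  have hf_sq (w : ℝ) : (√(P w))⁻¹ ^ 2 = (P w)⁻¹ := by rw [inv_pow, Real.sq_sqrt (hP w).le]
  have hg_sq (w : ℝ) : (√(P w) * ‖𝓕 h w‖) ^ 2 = P w * ‖𝓕 h w‖ ^ 2 := by
    rw [mul_pow, Real.sq_sqrt (hP w).le]
  have hf : MemLp (fun w ↦ (√(P w))⁻¹) 2 := by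
    refine (memLp_two_iff_integrable_sq (Continuous.aestronglyMeasurable ?_)).2
      (by simpa only [hf_sq])
    exact hP_cont.sqrt.inv₀ fun w ↦ (Real.sqrt_pos.2 (hP w)).ne'
  have hg : MemLp (fun w ↦ √(P w) * ‖𝓕 h w‖) 2 := by
    refine (memLp_two_iff_integrable_sq (Continuous.aestronglyMeasurable ?_)).2
      (by simpa only [hg_sq])
    exact hP_cont.sqrt.mul (𝓕 h).continuous.norm
  calc (∫ w, ‖𝓕 h w‖) ^ 2 = (∫ w, (√(P w))⁻¹ * (√(P w) * ‖𝓕 h w‖)) ^ 2 := by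
        simp only [fun w ↦ inv_mul_cancel_left₀ (Real.sqrt_pos.2 (hP w)).ne' ‖𝓕 h w‖]
    _ ≤ (∫ w, (P w)⁻¹) * ∫ w, P w * ‖𝓕 h w‖ ^ 2 := by
        simpa only [hf_sq, hg_sq] using
          sq_integral_mul_le (fun w ↦ by positivity) (fun w ↦ by positivity) hf hg
    _ = _ := by
        rw [hP_integral, hPh_integral]; field_simp

lemma sq_integral_norm_fourier_le_of_forall_notMem_Icc_eq_zero (h : 𝓢(ℝ, F)) {a b r B₀ B₁ : ℝ}
    (hab : a ≤ b) (hr : 0 < r) (hh_zero : ∀ y ∉ Set.Icc a b, h y = 0)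
    (hB₀ : ∀ y ∈ Set.Icc a b, ‖h y‖ ≤ B₀)
    (hB₁ : ∀ y ∈ Set.Icc a b, ‖deriv h y‖ ≤ B₁ * r) :
    (∫ w, ‖𝓕 h w‖) ^ 2 ≤ (B₀ ^ 2 + B₁ ^ 2) / 2 * ((b - a) * r) := by
  calc (∫ w, ‖𝓕 h w‖) ^ 2
      ≤ (r * (∫ y, ‖h y‖ ^ 2) + r⁻¹ * ∫ y, ‖deriv h y‖ ^ 2) / 2 :=
        sq_integral_norm_fourier_le h hr
    _ ≤ (r * (B₀ ^ 2 * (b - a)) + r⁻¹ * ((B₁ * r) ^ 2 * (b - a))) / 2 := by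
        gcongr
        · exact integral_norm_sq_le_of_forall_notMem_eq_zero hab hh_zero hB₀
        · exact integral_norm_sq_le_of_forall_notMem_eq_zero hab
            (fun y ↦ deriv_eq_zero_of_forall_notMem_eq_zero isClosed_Icc hh_zero) hB₁
    _ = _ := by field_simp

end BernsteinInequality

section GaussianSubordination

variable {V : Type*} [NormedAddCommGroup V] [InnerProductSpace ℝ V] [FiniteDimensional ℝ V]
  [MeasurableSpace V] [BorelSpace V]

lemma norm_integral_cexp_neg_mul_sq_norm_add_inner_le {b : ℂ} (hb : 0 < b.re) (x : V) :
    ‖∫ ξ : V, cexp (-b * (‖ξ‖ : ℂ) ^ 2 + I * ⟪x, ξ⟫)‖ ≤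
      (π / ‖b‖) ^ ((Module.finrank ℝ V : ℝ) / 2) := by
  have hcpow : ‖((π : ℂ) / b) ^ ((Module.finrank ℝ V : ℂ) / 2)‖ =
      (π / ‖b‖) ^ ((Module.finrank ℝ V : ℝ) / 2) := by
    have hexponent : (Module.finrank ℝ V : ℂ) / 2 = ((Module.finrank ℝ V / 2 : ℝ) : ℂ) := by
      push_cast; rfl
    rw [hexponent, norm_cpow_real, norm_div, norm_real, Real.norm_of_nonneg Real.pi_pos.le]
  have hre : (I ^ 2 * (‖x‖ : ℂ) ^ 2 / (4 * b)).re ≤ 0 := by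
    have : I ^ 2 * (‖x‖ : ℂ) ^ 2 / (4 * b) = ((-(‖x‖ ^ 2 / 4) : ℝ) : ℂ) * b⁻¹ := by
      rw [I_sq, div_eq_mul_inv, mul_inv]; push_cast; ring
    rw [this, re_ofReal_mul, inv_re]
    exact mul_nonpos_of_nonpos_of_nonneg (neg_nonpos.2 (by positivity))
      (div_nonneg hb.le (normSq_nonneg b))
  rw [GaussianFourier.integral_cexp_neg_mul_sq_norm_add hb, norm_mul, hcpow, Complex.norm_exp]
  exact mul_le_of_le_one_right (by positivity) (Real.exp_le_one_iff.2 hre)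

lemma schwartzMap_eq_integral_cexp_mul_fourier (h : 𝓢(ℝ, ℂ)) (y : ℝ) :
    h y = ∫ w : ℝ, cexp ((2 * π * w * y : ℝ) * I) * 𝓕 h w := by
  calc h y = 𝓕⁻ (𝓕 h) y := by rw [FourierTransform.fourierInv_fourier_eq]
    _ = ∫ w : ℝ, cexp ((2 * π * ⟪w, y⟫ : ℝ) * I) • 𝓕 h w := by
      rw [SchwartzMap.fourierInv_coe, Real.fourierInv_eq']
    _ = _ := by
      simp only [smul_eq_mul, Real.inner_apply, mul_assoc]

lemma integral_cexp_mul_comp_sq_norm (h : 𝓢(ℝ, ℂ)) {β : ℝ} (hβ : 0 < β) (ν : ℝ) (x : V) :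
    ∫ ξ : V, cexp (-(β - ν * I) * (‖ξ‖ : ℂ) ^ 2 + I * ⟪x, ξ⟫) * h (‖ξ‖ ^ 2) =
      ∫ w : ℝ, 𝓕 h w *
        ∫ ξ : V, cexp (-(β - (ν + 2 * π * w : ℝ) * I) * (‖ξ‖ : ℂ) ^ 2 + I * ⟪x, ξ⟫) := by
  have hgauss : Integrable fun ξ : V ↦ cexp (-(β - ν * I) * (‖ξ‖ : ℂ) ^ 2 + I * ⟪x, ξ⟫) :=
    GaussianFourier.integrable_cexp_neg_mul_sq_norm_add (by simpa using hβ) I x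
  have hcont := (𝓕 h).continuous
  simp_rw [fun ξ : V ↦ schwartzMap_eq_integral_cexp_mul_fourier h (‖ξ‖ ^ 2),
    ← integral_const_mul]
  rw [integral_integral_swap]
  · congr! 4 with w
    rw [← mul_assoc, ← Complex.exp_add, mul_comm]
    congr 2
    push_cast; ring
  · refine (hgauss.mul_prod ((𝓕 h).integrable (μ := volume))).mono ?_ (.of_forall fun z ↦ ?_)
    · refine Continuous.aestronglyMeasurable ?_
      simp only [Function.uncurry_def]
      fun_prop
    · simp only [Function.uncurry_def, norm_mul, norm_exp_ofReal_mul_I, one_mul, le_refl]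

lemma le_norm_ofReal_sub_ofReal_mul_I (β ν : ℝ) : β ≤ ‖(β - ν * I : ℂ)‖ := by
  simpa using (le_abs_self _).trans (abs_re_le_norm (β - ν * I : ℂ))

lemma abs_le_norm_ofReal_sub_ofReal_mul_I (β ν : ℝ) : |ν| ≤ ‖(β - ν * I : ℂ)‖ := by
  simpa using abs_im_le_norm (β - ν * I : ℂ)

lemma integrable_mul_rpow_div_norm_sub_mul_I {f : ℝ → ℝ} (hf : Integrable f) {β p : ℝ}
    (hβ : 0 < β) (hp : 0 ≤ p) (ν : ℝ) :
    Integrable fun w ↦ f w * (π / ‖(β - (ν + 2 * π * w : ℝ) * I : ℂ)‖) ^ p := by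
  have hpos (w : ℝ) : 0 < ‖(β - (ν + 2 * π * w : ℝ) * I : ℂ)‖ :=
    hβ.trans_le (le_norm_ofReal_sub_ofReal_mul_I _ _)
  refine hf.mul_bdd (c := (π / β) ^ p) (Continuous.aestronglyMeasurable ?_)
    (.of_forall fun w ↦ ?_)
  · refine Continuous.rpow_const ?_ fun w ↦ .inr hp
    exact continuous_const.div (by fun_prop) fun w ↦ (hpos w).ne'
  · rw [Real.norm_of_nonneg (by positivity)]
    gcongr
    exact le_norm_ofReal_sub_ofReal_mul_I _ _

lemma norm_integral_cexp_mul_comp_sq_norm_le (h : 𝓢(ℝ, ℂ)) {β : ℝ} (hβ : 0 < β) (ν : ℝ) (x : V) :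
    ‖∫ ξ : V, cexp (-(β - ν * I) * (‖ξ‖ : ℂ) ^ 2 + I * ⟪x, ξ⟫) * h (‖ξ‖ ^ 2)‖ ≤
      ∫ w, ‖𝓕 h w‖ * (π / ‖(β - (ν + 2 * π * w : ℝ) * I : ℂ)‖) ^
        ((Module.finrank ℝ V : ℝ) / 2) := by
  rw [integral_cexp_mul_comp_sq_norm h hβ]
  refine norm_integral_le_of_norm_le
    (integrable_mul_rpow_div_norm_sub_mul_I (𝓕 h).integrable.norm hβ (by positivity) ν)
    (.of_forall fun w ↦ ?_)
  rw [norm_mul]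
  gcongr
  exact norm_integral_cexp_neg_mul_sq_norm_add_inner_le (by simpa using hβ) x

/-- `m` separates the frequencies at which the Gaussian weight decays from those at which only
its maximal size `(π / β) ^ p` is available. -/
lemma integral_mul_rpow_div_norm_sub_mul_I_le {f : ℝ → ℝ} (hf₀ : 0 ≤ f) (hf : Integrable f)
    {β ν m p Q : ℝ} (hβ : 0 < β) (hm : 0 < m) (hp : 0 ≤ p)
    (hQ : ∀ w, |ν + 2 * π * w| ≤ m → f w ≤ Q) :
    ∫ w, f w * (π / ‖(β - (ν + 2 * π * w : ℝ) * I : ℂ)‖) ^ p ≤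
      (π / m) ^ p * (∫ w, f w) + m / π * (Q * (π / β) ^ p) := by
  set b : ℝ → ℂ := fun w ↦ β - (ν + 2 * π * w : ℝ) * I
  set S : Set ℝ := Set.Icc ((-m - ν) / (2 * π)) ((m - ν) / (2 * π))
  have hmem (w : ℝ) : w ∈ S ↔ |ν + 2 * π * w| ≤ m := by
    rw [Set.mem_Icc, div_le_iff₀ (by positivity), le_div_iff₀ (by positivity), abs_le]
    constructor <;> rintro ⟨_, _⟩ <;> constructor <;> linarith
  have hvol : volume.real S = m / π := by
    rw [Real.volume_real_Icc_of_le (by gcongr; linarith)]; field_simp; ring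
  set W := Q * (π / β) ^ p
  have hpointwise (w : ℝ) :
      f w * (π / ‖b w‖) ^ p ≤ (π / m) ^ p * f w + S.indicator (fun _ ↦ W) w := by
    have hfw := hf₀ w
    by_cases hw : w ∈ S
    · have hbβ : β ≤ ‖b w‖ := le_norm_ofReal_sub_ofReal_mul_I _ _
      rw [Set.indicator_of_mem hw]
      calc f w * (π / ‖b w‖) ^ p ≤ Q * (π / β) ^ p := by
            have hQw := hQ w ((hmem w).1 hw)
            have hQ₀ := hfw.trans hQw
            gcongr
        _ ≤ _ := le_add_of_nonneg_left (mul_nonneg (by positivity) hfw)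
    · have hmb : m ≤ ‖b w‖ :=
        (not_le.1 (mt (hmem w).2 hw)).le.trans (abs_le_norm_ofReal_sub_ofReal_mul_I _ _)
      rw [Set.indicator_of_notMem hw, add_zero, mul_comm]
      gcongr
  have hind : Integrable (S.indicator fun _ ↦ W) :=
    (integrable_indicator_iff measurableSet_Icc).2 (integrableOn_const (by simp))
  calc ∫ w, f w * (π / ‖b w‖) ^ p
      ≤ ∫ w, ((π / m) ^ p * f w + S.indicator (fun _ ↦ W) w) :=
        integral_mono (integrable_mul_rpow_div_norm_sub_mul_I hf hβ hp ν)
          ((hf.const_mul _).add hind) hpointwise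
    _ = (π / m) ^ p * (∫ w, f w) + m / π * W := by
        rw [integral_add (hf.const_mul _) hind, integral_const_mul,
          integral_indicator measurableSet_Icc, setIntegral_const, hvol, smul_eq_mul]

end GaussianSubordination

section NonstationaryPhase

lemma integral_cexp_mul_deriv_mul {φ : ℝ → ℝ} {g : ℝ → ℂ} (hφ : ContDiff ℝ 1 φ)
    (hg : ContDiff ℝ 1 g) (hgc : HasCompactSupport g) (t : ℝ) :
    I * t * ∫ u, cexp (I * (t * φ u : ℝ)) * (deriv φ u * g u) =
      -∫ u, cexp (I * (t * φ u : ℝ)) * deriv g u := by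
  have hexp (u : ℝ) : HasDerivAt (fun u ↦ cexp (I * (t * φ u : ℝ)))
      (cexp (I * (t * φ u : ℝ)) * (I * (t * deriv φ u : ℝ))) u :=
    (((hφ.differentiable one_ne_zero u).hasDerivAt.const_mul t).ofReal_comp.const_mul I).cexp
  have hφ_cont := hφ.continuous
  have hg_cont := hg.continuous
  calc I * t * ∫ u, cexp (I * (t * φ u : ℝ)) * (deriv φ u * g u)
      = ∫ u, g u * (cexp (I * (t * φ u : ℝ)) * (I * (t * deriv φ u : ℝ))) := by
        rw [← integral_const_mul]
        refine integral_congr_ae (.of_forall fun u ↦ ?_)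
        push_cast; ring
    _ = -∫ u, deriv g u * cexp (I * (t * φ u : ℝ)) :=
        integral_mul_deriv_eq_deriv_mul_of_integrable
          (fun u _ ↦ (hg.differentiable one_ne_zero u).hasDerivAt) (fun u _ ↦ hexp u)
          (Continuous.integrable_of_hasCompactSupport (by fun_prop) hgc.mul_right)
          (Continuous.integrable_of_hasCompactSupport (by fun_prop) hgc.deriv.mul_right)
          (Continuous.integrable_of_hasCompactSupport (by fun_prop) hgc.mul_right)
    _ = _ := by simp only [mul_comm]

variable {P : Type*} [NormedAddCommGroup P] [NormedSpace ℝ P]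

lemma contDiffOn_deriv_left {E : Type*} [NormedAddCommGroup E] [NormedSpace ℝ E]
    {B : ℝ → P → E} {U : Set P} (hU : IsOpen U)
    (hB : ContDiffOn ℝ ∞ (Function.uncurry B) (Set.univ ×ˢ U)) :
    ContDiffOn ℝ ∞ (Function.uncurry fun u p ↦ deriv (B · p) u) (Set.univ ×ˢ U) := by
  have hopen : IsOpen ((Set.univ : Set ℝ) ×ˢ U) := isOpen_univ.prod hU
  refine ((hB.fderiv_of_isOpen hopen (m := ∞) le_rfl).clm_apply
    (contDiffOn_const (c := ((1 : ℝ), (0 : P))))).congr fun ⟨u, p⟩ hup ↦ ?_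
  have hdiff : HasFDerivAt (Function.uncurry B) (fderiv ℝ (Function.uncurry B) (u, p)) (u, p) :=
    ((hB.contDiffAt (hopen.mem_nhds hup)).differentiableAt (by simp)).hasFDerivAt
  exact (hdiff.comp_hasDerivAt u ((hasDerivAt_id u).prodMk (hasDerivAt_const u p))).deriv

lemma contDiff_left_of_contDiffOn_uncurry {E : Type*} [NormedAddCommGroup E] [NormedSpace ℝ E]
    {B : ℝ → P → E} {U : Set P} (hB : ContDiffOn ℝ ∞ (Function.uncurry B) (Set.univ ×ˢ U))
    {p : P} (hp : p ∈ U) : ContDiff ℝ ∞ (B · p) :=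
  contDiffOn_univ.1 <| hB.comp (contDiff_id.prodMk contDiff_const).contDiffOn
    fun _ _ ↦ ⟨Set.mem_univ _, hp⟩

lemma contDiffOn_div_of_forall_notMem_eq_zero {U : Set P} (hU : IsOpen U) {S : Set ℝ}
    (hS : IsClosed S) {A ψ : ℝ → P → ℂ}
    (hA : ContDiffOn ℝ ∞ (Function.uncurry A) (Set.univ ×ˢ U))
    (hψ : ContDiffOn ℝ ∞ (Function.uncurry ψ) (Set.univ ×ˢ U))
    (hψ_ne : ∀ p ∈ U, ∀ u ∈ S, ψ u p ≠ 0) (hA_zero : ∀ p ∈ U, ∀ u ∉ S, A u p = 0) :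
    ContDiffOn ℝ ∞ (Function.uncurry fun u p ↦ A u p / ψ u p) (Set.univ ×ˢ U) := by
  rintro ⟨u, p⟩ hup
  by_cases hu : u ∈ S
  · simp only [div_eq_mul_inv]
    exact (hA _ hup).mul ((hψ _ hup).inv (hψ_ne p hup.2 u hu))
  · have hzero : (Function.uncurry fun u p ↦ A u p / ψ u p) =ᶠ[nhds (u, p)] fun _ ↦ 0 := by
      filter_upwards [(hS.isOpen_compl.prod hU).mem_nhds ⟨hu, hup.2⟩] with q hq
      simp [Function.uncurry, hA_zero q.2 hq.2 q.1 hq.1]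
    exact (contDiffAt_const.congr_of_eventuallyEq hzero).contDiffWithinAt

/-- Nonstationary phase, uniformly over a compact set `K` of parameters: the operator
`A ↦ ∂ᵤ (A / ∂ᵤφ)` gains a factor `t⁻¹` and preserves the class of admissible amplitudes. -/
lemma exists_norm_integral_cexp_mul_le_inv_pow {U K : Set P} (hU : IsOpen U) (hK : IsCompact K)
    (hKU : K ⊆ U) {S : Set ℝ} (hS : IsCompact S) {φ : ℝ → P → ℝ}
    (hφ : ContDiffOn ℝ ∞ (Function.uncurry φ) (Set.univ ×ˢ U))
    (hφ_ne : ∀ p ∈ U, ∀ u ∈ S, deriv (φ · p) u ≠ 0) (N : ℕ) {A : ℝ → P → ℂ}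
    (hA : ContDiffOn ℝ ∞ (Function.uncurry A) (Set.univ ×ˢ U))
    (hA_zero : ∀ p ∈ U, ∀ u ∉ S, A u p = 0) :
    ∃ C : ℝ, 0 ≤ C ∧ ∀ p ∈ K, ∀ t : ℝ, 0 < t →
      ‖∫ u, cexp (I * (t * φ u p : ℝ)) * A u p‖ ≤ C * t⁻¹ ^ N := by
  induction N generalizing A with
  | zero =>
    obtain ⟨M, hM⟩ := (hS.prod hK).exists_bound_of_continuousOn
      (hA.continuousOn.mono (Set.prod_mono (Set.subset_univ S) hKU))
    refine ⟨|M| * volume.real S, by positivity, fun p hp t _ ↦ ?_⟩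
    rw [← setIntegral_eq_integral_of_forall_compl_eq_zero (s := S)
      (fun u hu ↦ by rw [hA_zero p (hKU hp) u hu, mul_zero]), pow_zero, mul_one]
    refine norm_setIntegral_le_of_norm_le_const hS.measure_lt_top fun u hu ↦ ?_
    rw [norm_mul, mul_comm I, norm_exp_ofReal_mul_I, one_mul]
    exact (hM (u, p) ⟨hu, hp⟩).trans (le_abs_self M)
  | succ N ih =>
    set g : ℝ → P → ℂ := fun u p ↦ A u p / (deriv (φ · p) u : ℝ)
    have hg : ContDiffOn ℝ ∞ (Function.uncurry g) (Set.univ ×ˢ U) :=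
      contDiffOn_div_of_forall_notMem_eq_zero hU hS.isClosed hA
        (ofRealCLM.contDiff.comp_contDiffOn (contDiffOn_deriv_left hU hφ))
        (fun p hp u hu ↦ ofReal_ne_zero.2 (hφ_ne p hp u hu)) hA_zero
    have hg_zero : ∀ p ∈ U, ∀ u ∉ S, g u p = 0 := fun p hp u hu ↦ by
      simp only [g, hA_zero p hp u hu, zero_div]
    obtain ⟨C, hC, bound⟩ := ih (contDiffOn_deriv_left hU hg) fun p hp u hu ↦
      deriv_eq_zero_of_forall_notMem_eq_zero hS.isClosed (hg_zero p hp) hu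
    refine ⟨C, hC, fun p hp t ht ↦ ?_⟩
    have hA_eq (u : ℝ) : A u p = (deriv (φ · p) u : ℝ) * g u p := by
      by_cases hu : u ∈ S
      · exact (mul_div_cancel₀ _ (ofReal_ne_zero.2 (hφ_ne p (hKU hp) u hu))).symm
      · rw [hA_zero p (hKU hp) u hu, hg_zero p (hKU hp) u hu, mul_zero]
    have parts := congrArg norm <| integral_cexp_mul_deriv_mul
      ((contDiff_left_of_contDiffOn_uncurry hφ (hKU hp)).of_le (by simp))
      ((contDiff_left_of_contDiffOn_uncurry hg (hKU hp)).of_le (by simp))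
      (HasCompactSupport.intro hS (hg_zero p (hKU hp))) t
    simp only [← hA_eq, norm_mul, norm_I, one_mul, norm_real, Real.norm_of_nonneg ht.le,
      norm_neg] at parts
    rw [pow_succ, ← mul_assoc, le_mul_inv_iff₀ ht, mul_comm, parts]
    exact bound p hp t ht

end NonstationaryPhase

section RadialProfile

/-- The function `h` of `y = |ξ|²` determined by
`e^{it|ξ|} ζ(|ξ| - l) = e^{-(l⁻² - i t/(2l)) |ξ|²} h(|ξ|²)`. The subtracted phase `t y / (2l)` is,
up to a constant, the linearization of `t √y` at the centre `y = l²` of the annulus, so `h`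
oscillates slowly. For `y < 0` the convention `√y = 0` gives `h y = 0` whenever `ζ (-l) = 0`. -/
noncomputable def radialProfile (ζ : ℝ → ℂ) (t l y : ℝ) : ℂ :=
  cexp ((((l ^ 2)⁻¹ : ℝ) - (t / (2 * l) : ℝ) * I) * y + I * (t * √y : ℝ)) * ζ (√y - l)

variable {ζ : ℝ → ℂ} {κ t l y : ℝ}

lemma cexp_mul_eq_gaussian_mul_radialProfile (ζ : ℝ → ℂ) (t l a : ℝ) {r : ℝ} (hr : 0 ≤ r) :
    cexp (I * (t * r + a : ℝ)) * ζ (r - l) =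
      cexp (-(((l ^ 2)⁻¹ : ℝ) - (t / (2 * l) : ℝ) * I) * (r : ℂ) ^ 2 + I * a) *
        radialProfile ζ t l (r ^ 2) := by
  rw [radialProfile, Real.sqrt_sq hr, ← mul_assoc, ← Complex.exp_add]
  congr 2
  push_cast; ring

lemma norm_cexp_sub_mul_I_mul_add_I_mul (a b y c : ℝ) :
    ‖cexp ((a - b * I) * y + I * c)‖ = Real.exp (a * y) := by
  rw [Complex.norm_exp]
  simp

lemma norm_radialProfile : ‖radialProfile ζ t l y‖ = Real.exp (y / l ^ 2) * ‖ζ (√y - l)‖ := by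
  rw [radialProfile, norm_mul, norm_cexp_sub_mul_I_mul_add_I_mul, div_eq_inv_mul]

lemma abs_sqrt_sub_le_iff (hκ : 0 ≤ κ) (hl : κ < l) :
    |√y - l| ≤ κ ↔ y ∈ Set.Icc ((l - κ) ^ 2) ((l + κ) ^ 2) := by
  rw [Set.mem_Icc, ← Real.le_sqrt' (by linarith), ← Real.sqrt_le_left (by linarith), abs_le]
  constructor <;> rintro ⟨_, _⟩ <;> constructor <;> linarith

lemma radialProfile_eq_zero (hζ_zero : ∀ s, κ < |s| → ζ s = 0) (hy : κ < |√y - l|) :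
    radialProfile ζ t l y = 0 := by
  rw [radialProfile, hζ_zero _ hy, mul_zero]

lemma radialProfile_eq_zero_of_notMem_Icc (hκ : 0 ≤ κ) (hl : κ < l)
    (hζ_zero : ∀ s, κ < |s| → ζ s = 0) (hy : y ∉ Set.Icc ((l - κ) ^ 2) ((l + κ) ^ 2)) :
    radialProfile ζ t l y = 0 :=
  radialProfile_eq_zero hζ_zero (not_le.1 (mt (abs_sqrt_sub_le_iff hκ hl).1 hy))

lemma contDiff_radialProfile {n : ℕ∞} (hκ : 0 ≤ κ) (hl : κ < l) (hζ : ContDiff ℝ n ζ)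
    (hζ_zero : ∀ s, κ < |s| → ζ s = 0) : ContDiff ℝ n (radialProfile ζ t l) := by
  refine contDiff_iff_contDiffAt.2 fun y ↦ ?_
  rcases lt_or_ge 0 y with hy | hy
  · have hsqrt : ContDiffAt ℝ n (fun y : ℝ ↦ √y) y := contDiffAt_id.sqrt hy.ne'
    have hofReal {f : ℝ → ℝ} (hf : ContDiffAt ℝ n f y) : ContDiffAt ℝ n (fun y ↦ (f y : ℂ)) y :=
      ofRealCLM.contDiff.contDiffAt.comp y hf
    refine ContDiffAt.mul ?_ (hζ.contDiffAt.comp y (hsqrt.sub contDiffAt_const))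
    exact ((contDiffAt_const.mul (hofReal contDiffAt_id)).add
      (contDiffAt_const.mul (hofReal (contDiffAt_const.mul hsqrt)))).cexp
  · have hzero : radialProfile ζ t l =ᶠ[nhds y] fun _ ↦ 0 := by
      filter_upwards [Iio_mem_nhds (show y < (l - κ) ^ 2 by nlinarith)] with z hz
      exact radialProfile_eq_zero_of_notMem_Icc hκ hl hζ_zero fun hmem ↦ hmem.1.not_gt hz
    exact contDiffAt_const.congr_of_eventuallyEq hzero

lemma exists_schwartzMap_coe_eq_radialProfile (hκ : 0 ≤ κ) (hl : κ < l) (hζ : ContDiff ℝ ∞ ζ)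
    (hζ_zero : ∀ s, κ < |s| → ζ s = 0) (t : ℝ) :
    ∃ h : 𝓢(ℝ, ℂ), (h : ℝ → ℂ) = radialProfile ζ t l :=
  have hsupp : HasCompactSupport (radialProfile ζ t l) := HasCompactSupport.intro isCompact_Icc
    fun _ ↦ radialProfile_eq_zero_of_notMem_Icc hκ hl hζ_zero
  ⟨hsupp.toSchwartzMap (contDiff_radialProfile hκ hl hζ hζ_zero), rfl⟩

lemma exp_div_sq_le (hl : 0 < l) (hy : y ≤ (2 * l) ^ 2) :
    Real.exp (y / l ^ 2) ≤ Real.exp 4 := by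
  rw [Real.exp_le_exp, div_le_iff₀ (by positivity)]
  linarith

lemma hasDerivAt_radialProfile (hζ : Differentiable ℝ ζ) (hy : 0 < y) :
    HasDerivAt (radialProfile ζ t l)
      (cexp ((((l ^ 2)⁻¹ : ℝ) - (t / (2 * l) : ℝ) * I) * y + I * (t * √y : ℝ)) *
        ((((l ^ 2)⁻¹ : ℝ) + (t * (1 / (2 * √y) - 1 / (2 * l)) : ℝ) * I) * ζ (√y - l) +
          (1 / (2 * √y) : ℝ) * deriv ζ (√y - l))) y := by
  have hsqrt : HasDerivAt (fun y : ℝ ↦ √y) (1 / (2 * √y)) y := Real.hasDerivAt_sqrt hy.ne'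
  have hexponent := ((hasDerivAt_id y).ofReal_comp.const_mul
    ((((l ^ 2)⁻¹ : ℝ) : ℂ) - (t / (2 * l) : ℝ) * I)).add
      ((hsqrt.const_mul t).ofReal_comp.const_mul I)
  have hcutoff : HasDerivAt (fun y ↦ ζ (√y - l)) ((1 / (2 * √y)) • deriv ζ (√y - l)) y :=
    (hζ (√y - l)).hasDerivAt.scomp y (hsqrt.sub_const l)
  refine (hexponent.cexp.mul hcutoff).congr_deriv ?_
  simp only [id, real_smul, Pi.add_apply]
  push_cast; ring

lemma one_div_two_mul_sqrt_le (hκ : 0 ≤ κ) (hl : κ + 1 ≤ l) (hdist : |√y - l| ≤ κ) :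
    1 / (2 * √y) ≤ (κ + 1) / 2 * (1 / l) := by
  have hsqrt : l - κ ≤ √y := by linarith [(abs_le.1 hdist).1]
  rw [div_mul_div_comm, div_le_div_iff₀ (by linarith) (by linarith)]
  nlinarith

lemma abs_mul_one_div_two_mul_sqrt_sub_le (hκ : 0 ≤ κ) (hl : κ + 1 ≤ l) (ht : 0 ≤ t)
    (hdist : |√y - l| ≤ κ) :
    |t * (1 / (2 * √y) - 1 / (2 * l))| ≤ κ * (κ + 1) / 2 * (t / l ^ 2) := by
  have hl₀ : 0 < l := by linarith
  have hsqrt : 0 < √y := by linarith [(abs_le.1 hdist).1]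
  have hfactor : t * (1 / (2 * √y) - 1 / (2 * l)) = t / l * (1 / (2 * √y)) * (l - √y) := by
    field_simp
  rw [hfactor, abs_mul, abs_of_nonneg (by positivity), abs_sub_comm]
  calc t / l * (1 / (2 * √y)) * |√y - l| ≤ t / l * ((κ + 1) / 2 * (1 / l)) * κ := by
        gcongr; exact one_div_two_mul_sqrt_le hκ hl hdist
    _ = _ := by field_simp

/-- The linearized phase has derivative `t / (2√y) - t / (2l) = O(t / l²)` on the support, while
differentiating the amplitude costs `O(1 / l)`, which is also `O(t / l²)` because `t ≥ c l`. -/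
lemma norm_deriv_radialProfile_le {c M : ℝ} (hc : 0 < c) (hκ : 0 ≤ κ) (hl : κ + 1 ≤ l)
    (ht : c * l ≤ t) (hζ : Differentiable ℝ ζ) (hM : ∀ s, ‖ζ s‖ ≤ M)
    (hM' : ∀ s, ‖deriv ζ s‖ ≤ M) (hy : y ∈ Set.Icc ((l - κ) ^ 2) ((l + κ) ^ 2)) :
    ‖deriv (radialProfile ζ t l) y‖ ≤
      Real.exp 4 * M * ((1 + (κ + 1) / 2) / c + κ * (κ + 1) / 2) * (t / l ^ 2) := by
  have hl₀ : 0 < l := by linarith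
  have ht₀ : 0 < t := lt_of_lt_of_le (by positivity) ht
  have hdist : |√y - l| ≤ κ := (abs_sqrt_sub_le_iff hκ (by linarith)).2 hy
  have hy₀ : 0 < y := Real.sqrt_pos.1 (by linarith [(abs_le.1 hdist).1])
  have hinv_l : 1 / l ≤ t / l ^ 2 / c := by
    rw [div_div, div_le_div_iff₀ hl₀ (by positivity)]; nlinarith
  have hinv_sq : (l ^ 2)⁻¹ ≤ t / l ^ 2 / c := by
    refine le_trans ?_ hinv_l
    rw [← one_div]
    exact one_div_le_one_div_of_le hl₀ (by nlinarith)
  have hlog_deriv : ‖(((l ^ 2)⁻¹ : ℝ) + (t * (1 / (2 * √y) - 1 / (2 * l)) : ℝ) * I : ℂ)‖ ≤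
      t / l ^ 2 / c + κ * (κ + 1) / 2 * (t / l ^ 2) := by
    refine (norm_add_le _ _).trans ?_
    rw [norm_mul, norm_I, mul_one, norm_real, norm_real,
      Real.norm_of_nonneg (by positivity : 0 ≤ (l ^ 2)⁻¹)]
    exact add_le_add hinv_sq (abs_mul_one_div_two_mul_sqrt_sub_le hκ hl ht₀.le hdist)
  have hsqrt_deriv : ‖((1 / (2 * √y) : ℝ) : ℂ)‖ ≤ (κ + 1) / 2 * (t / l ^ 2 / c) := by
    rw [norm_real, Real.norm_of_nonneg (by positivity)]
    exact (one_div_two_mul_sqrt_le hκ hl hdist).trans (by gcongr)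
  rw [(hasDerivAt_radialProfile hζ hy₀).deriv, norm_mul, norm_cexp_sub_mul_I_mul_add_I_mul,
    ← div_eq_inv_mul]
  calc _ ≤ Real.exp 4 * ((t / l ^ 2 / c + κ * (κ + 1) / 2 * (t / l ^ 2)) * M +
          (κ + 1) / 2 * (t / l ^ 2 / c) * M) := by
        refine mul_le_mul (exp_div_sq_le hl₀ (hy.2.trans (by gcongr; linarith)))
          ((norm_add_le _ _).trans (add_le_add ?_ ?_)) (norm_nonneg _) (Real.exp_pos 4).le
        · rw [norm_mul]; gcongr; exact hM _
        · rw [norm_mul]; gcongr; exact hM' _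
    _ = _ := by field_simp; ring

lemma exists_integral_norm_fourier_radialProfile_le {c : ℝ} (hc : 0 < c) (hκ : 0 ≤ κ)
    (hζ : ContDiff ℝ ∞ ζ) (hζ_zero : ∀ s, κ < |s| → ζ s = 0) :
    ∃ D : ℝ, 0 ≤ D ∧ ∀ l t : ℝ, κ + 1 ≤ l → c * l ≤ t →
      ∫ w, ‖𝓕 (radialProfile ζ t l) w‖ ≤ D * √(t / l) := by
  obtain ⟨M, hM⟩ := exists_forall_norm_le_and_norm_deriv_le (hζ.of_le (by simp))
    (HasCompactSupport.intro (isCompact_Icc (a := -κ) (b := κ))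
      fun s hs ↦ hζ_zero s (not_le.1 (mt abs_le.1 hs)))
  set B₀ := Real.exp 4 * M
  set B₁ := Real.exp 4 * M * ((1 + (κ + 1) / 2) / c + κ * (κ + 1) / 2)
  refine ⟨√(2 * κ * (B₀ ^ 2 + B₁ ^ 2)), Real.sqrt_nonneg _, fun l t hl ht ↦ ?_⟩
  have hl₀ : 0 < l := by linarith
  have hκl : κ < l := by linarith
  have ht₀ : 0 < t := lt_of_lt_of_le (by positivity) ht
  obtain ⟨h, hh⟩ := exists_schwartzMap_coe_eq_radialProfile hκ hκl hζ hζ_zero t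
  have hB₀ : ∀ y ∈ Set.Icc ((l - κ) ^ 2) ((l + κ) ^ 2), ‖h y‖ ≤ B₀ := fun y hy ↦ by
    rw [hh, norm_radialProfile]
    exact mul_le_mul (exp_div_sq_le hl₀ (hy.2.trans (by gcongr; linarith))) (hM _).1
      (norm_nonneg _) (Real.exp_pos 4).le
  have hB₁ : ∀ y ∈ Set.Icc ((l - κ) ^ 2) ((l + κ) ^ 2), ‖deriv h y‖ ≤ B₁ * (t / l ^ 2) :=
    fun y hy ↦ hh ▸ norm_deriv_radialProfile_le hc hκ hl ht (hζ.differentiable (by simp))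
      (fun s ↦ (hM s).1) (fun s ↦ (hM s).2) hy
  have hsq := sq_integral_norm_fourier_le_of_forall_notMem_Icc_eq_zero h
    (by nlinarith : (l - κ) ^ 2 ≤ (l + κ) ^ 2) (by positivity)
    (fun y hy ↦ hh ▸ radialProfile_eq_zero_of_notMem_Icc hκ hκl hζ_zero hy) hB₀ hB₁
  rw [← hh, ← SchwartzMap.fourier_coe, ← Real.sqrt_mul (by positivity)]
  refine Real.le_sqrt_of_sq_le (hsq.trans_eq ?_)
  field_simp; ring

/-- The phase of the oscillatory integral `𝓕 (radialProfile ζ t l) w` after the substitution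
`y = (l + u)²`, up to a constant and the factor `t`. The parameters are `p = (l⁻¹, σ)`, where
`σ t / l = t / (2 l) + 2 π w`. -/
def rescaledPhase (u : ℝ) (p : ℝ × ℝ) : ℝ := u - p.2 * (2 * u + p.1 * u ^ 2)

/-- The amplitude of the oscillatory integral `𝓕 (radialProfile ζ t l) w` after the substitution
`y = (l + u)²`, up to the factor `l`; the parameter is `p.1 = l⁻¹`. -/
noncomputable def rescaledAmplitude (ζ : ℝ → ℂ) (u : ℝ) (p : ℝ × ℝ) : ℂ :=
  (2 * (1 + p.1 * u) * Real.exp ((1 + p.1 * u) ^ 2) : ℝ) * ζ u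

lemma integral_eq_integral_Ioi_comp_sq {E : Type*} [NormedAddCommGroup E] [NormedSpace ℝ E]
    {g : ℝ → E} (hg : ∀ y ≤ 0, g y = 0) :
    ∫ y, g y = ∫ r in Set.Ioi (0 : ℝ), (2 * r) • g (r ^ 2) := by
  have hpow : ∫ r in Set.Ioi (0 : ℝ), (2 * r) • g (r ^ 2) = ∫ y in Set.Ioi 0, g y := by
    simpa [show (2 : ℝ) - 1 = 1 by norm_num] using
      integral_comp_rpow_Ioi_of_pos (g := g) (two_pos (α := ℝ))
  rw [hpow]
  exact (setIntegral_eq_integral_of_forall_compl_eq_zero fun y hy ↦ hg y (not_lt.1 hy)).symm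

lemma smul_exp_smul_radialProfile_sq {σ w r : ℝ} (ζ : ℝ → ℂ) (ht : t ≠ 0) (hl : l ≠ 0)
    (hσ : t / (2 * l) + 2 * π * w = σ * (t / l)) (hr : 0 ≤ r) :
    (2 * r) • cexp ((-2 * π * r ^ 2 * w : ℝ) * I) • radialProfile ζ t l (r ^ 2) =
      l * cexp ((t * l * (1 - σ) : ℝ) * I) *
        (cexp (I * (t * rescaledPhase (r - l) (l⁻¹, σ) : ℝ)) *
          rescaledAmplitude ζ (r - l) (l⁻¹, σ)) := by
  have hphase : t * r - (t / (2 * l) + 2 * π * w) * r ^ 2 =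
      t * l * (1 - σ) + t * rescaledPhase (r - l) (l⁻¹, σ) := by
    rw [hσ, rescaledPhase]; field_simp; ring
  have hratio : 1 + l⁻¹ * (r - l) = r / l := by field_simp; ring
  have hexp : cexp ((-2 * π * r ^ 2 * w : ℝ) * I) *
        cexp ((((l ^ 2)⁻¹ : ℝ) - (t / (2 * l) : ℝ) * I) * (r ^ 2 : ℝ) + I * (t * r : ℝ)) =
      cexp ((t * l * (1 - σ) : ℝ) * I) *
        cexp (I * (t * rescaledPhase (r - l) (l⁻¹, σ) : ℝ)) * Real.exp ((r / l) ^ 2) := by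
    rw [ofReal_exp, ← Complex.exp_add, ← Complex.exp_add, ← Complex.exp_add]
    congr 1
    have := congrArg (fun a : ℝ ↦ (a : ℂ) * I) hphase
    push_cast at this ⊢
    linear_combination this
  simp only [radialProfile, rescaledAmplitude, Real.sqrt_sq hr, hratio, real_smul, smul_eq_mul]
  rw [← mul_assoc (cexp _) (cexp _), hexp]
  push_cast
  field_simp [ofReal_ne_zero.2 hl]

lemma norm_fourier_radialProfile_eq {σ w : ℝ} (hκ : 0 ≤ κ) (hl : κ < l) (ht : t ≠ 0)
    (hζ_zero : ∀ s, κ < |s| → ζ s = 0)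
    (hσ : t / (2 * l) + 2 * π * w = σ * (t / l)) :
    ‖𝓕 (radialProfile ζ t l) w‖ = l * ‖∫ u, cexp (I * (t * rescaledPhase u (l⁻¹, σ) : ℝ)) *
      rescaledAmplitude ζ u (l⁻¹, σ)‖ := by
  have hl₀ : 0 < l := hκ.trans_lt hl
  rw [Real.fourier_real_eq_integral_exp_smul, integral_eq_integral_Ioi_comp_sq fun y hy ↦ by
      rw [radialProfile_eq_zero_of_notMem_Icc hκ hl hζ_zero
        (fun hmem ↦ hy.not_gt (lt_of_lt_of_le (by nlinarith) hmem.1)), smul_zero],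
    setIntegral_congr_fun measurableSet_Ioi fun r hr ↦
      smul_exp_smul_radialProfile_sq ζ ht hl₀.ne' hσ (le_of_lt hr),
    setIntegral_eq_integral_of_forall_compl_eq_zero fun r hr ↦ by
      rw [rescaledAmplitude, hζ_zero (r - l) (lt_abs.2 (.inr (by linarith [Set.notMem_Ioi.1 hr]))),
        mul_zero, mul_zero, mul_zero],
    integral_const_mul,
    integral_sub_right_eq_self fun u ↦ cexp (I * (t * rescaledPhase u (l⁻¹, σ) : ℝ)) *
      rescaledAmplitude ζ u (l⁻¹, σ),
    norm_mul, norm_mul, norm_exp_ofReal_mul_I, norm_real, Real.norm_of_nonneg hl₀.le, mul_one]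

lemma hasDerivAt_rescaledPhase (u : ℝ) (p : ℝ × ℝ) :
    HasDerivAt (rescaledPhase · p) (1 - 2 * p.2 * (1 + p.1 * u)) u := by
  have := (hasDerivAt_id u).sub ((((hasDerivAt_id u).const_mul 2).add
    (((hasDerivAt_id u).pow 2).const_mul p.1)).const_mul p.2)
  refine this.congr_deriv ?_
  simp only [id]; push_cast; ring

lemma deriv_rescaledPhase_ne_zero {u : ℝ} {p : ℝ × ℝ} (hu : |u| ≤ κ)
    (hp : |p.2| * (1 + |p.1| * κ) < 1 / 2) : deriv (rescaledPhase · p) u ≠ 0 := by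
  rw [(hasDerivAt_rescaledPhase u p).deriv]
  have hsmall : |p.2 * (1 + p.1 * u)| ≤ |p.2| * (1 + |p.1| * κ) := by
    rw [abs_mul]
    gcongr
    refine (abs_add_le _ _).trans ?_
    rw [abs_one, abs_mul]
    gcongr
  linarith [(abs_le.1 hsmall).2]

lemma exists_norm_fourier_radialProfile_le (hκ : 0 ≤ κ) (hζ : ContDiff ℝ ∞ ζ)
    (hζ_zero : ∀ s, κ < |s| → ζ s = 0) (N : ℕ) :
    ∃ C : ℝ, 0 ≤ C ∧ ∀ l t w : ℝ, κ + 1 ≤ l → 0 < t →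
      |t / (2 * l) + 2 * π * w| ≤ t / l / 8 →
      ‖𝓕 (radialProfile ζ t l) w‖ ≤ C * l * t⁻¹ ^ N := by
  set U : Set (ℝ × ℝ) := {p | |p.2| * (1 + |p.1| * κ) < 1 / 2}
  set K : Set (ℝ × ℝ) := Set.Icc 0 (κ + 1)⁻¹ ×ˢ Set.Icc (-(1 / 8)) (1 / 8)
  have hKU : K ⊆ U := by
    rintro ⟨θ, σ⟩ ⟨hθ, hσ⟩
    have hθκ : θ * κ ≤ 1 := calc
      θ * κ ≤ (κ + 1)⁻¹ * (κ + 1) := by gcongr; exacts [hθ.2, by linarith]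
      _ = 1 := inv_mul_cancel₀ (by positivity)
    calc |σ| * (1 + |θ| * κ) ≤ 1 / 8 * (1 + 1) := by
          rw [abs_of_nonneg hθ.1]
          exact mul_le_mul (abs_le.2 hσ) (by gcongr) (add_nonneg zero_le_one
            (mul_nonneg hθ.1 hκ)) (by norm_num)
      _ < 1 / 2 := by norm_num
  have hφ : ContDiff ℝ ∞ (Function.uncurry rescaledPhase) := by
    simp only [Function.uncurry_def, rescaledPhase]; fun_prop
  have hA : ContDiff ℝ ∞ (Function.uncurry (rescaledAmplitude ζ)) := by
    simp only [Function.uncurry_def, rescaledAmplitude]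
    exact (ofRealCLM.contDiff.comp (by fun_prop : ContDiff ℝ ∞ fun p : ℝ × ℝ × ℝ ↦
      2 * (1 + p.2.1 * p.1) * Real.exp ((1 + p.2.1 * p.1) ^ 2))).mul (hζ.comp contDiff_fst)
  obtain ⟨C, hC, bound⟩ := exists_norm_integral_cexp_mul_le_inv_pow
    (U := U) (isOpen_lt (by fun_prop) (by fun_prop)) (isCompact_Icc.prod isCompact_Icc) hKU
    (isCompact_Icc (a := -κ) (b := κ)) hφ.contDiffOn
    (fun p hp u hu ↦ deriv_rescaledPhase_ne_zero (abs_le.2 hu) hp) N hA.contDiffOn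
    fun p _ u hu ↦ by
      rw [rescaledAmplitude, hζ_zero u (not_le.1 (mt abs_le.1 hu)), mul_zero]
  refine ⟨C, hC, fun l t w hl ht hw ↦ ?_⟩
  have hl₀ : 0 < l := by linarith
  set σ := (t / (2 * l) + 2 * π * w) / (t / l)
  have hσ : |σ| ≤ 1 / 8 := by
    rw [abs_div, abs_of_pos (by positivity : 0 < t / l), div_le_iff₀ (by positivity)]
    linarith
  refine (norm_fourier_radialProfile_eq hκ (by linarith) ht.ne' hζ_zero
    (div_mul_cancel₀ _ (by positivity)).symm).trans_le ?_
  rw [mul_comm C, mul_assoc l]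
  exact mul_le_mul_of_nonneg_left
    (bound (l⁻¹, σ) ⟨⟨by positivity, inv_anti₀ (by positivity) hl⟩, abs_le.1 hσ⟩ t ht) hl₀.le

end RadialProfile

section KernelDecay

lemma div_rpow_half_mul_le_of_le_mul_sqrt {a μ J D : ℝ} (ha : 0 ≤ a) (hμ : 0 < μ)
    (hJ : J ≤ D * √μ) (n : ℝ) :
    (a / μ) ^ (n / 2) * J ≤ D * a ^ (n / 2) * μ ^ (-(n - 1) / 2) := by
  have hexponent : -(n - 1) / 2 = 1 / 2 - n / 2 := by ring
  calc (a / μ) ^ (n / 2) * J ≤ (a / μ) ^ (n / 2) * (D * √μ) := by gcongr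
    _ = D * a ^ (n / 2) * μ ^ (-(n - 1) / 2) := by
      rw [Real.div_rpow ha hμ.le, hexponent, Real.rpow_sub hμ, Real.sqrt_eq_rpow]
      ring

lemma inv_pow_eq_rpow_mul_rpow {μ : ℝ} (hμ : 0 < μ) (n : ℕ) :
    μ⁻¹ ^ n = μ ^ (-((n : ℝ) + 1) / 2) * μ ^ (-((n : ℝ) - 1) / 2) := by
  rw [← Real.rpow_add hμ, inv_pow, ← Real.rpow_natCast, ← Real.rpow_neg hμ.le]
  congr 1; ring

lemma div_mul_inv_pow_succ_mul_rpow_half_le {a c l t : ℝ} (ha : 0 ≤ a) (hc : 0 < c) (hl : 0 < l)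
    (ht : c * l ≤ t) (n : ℕ) :
    t / l * (l * t⁻¹ ^ (n + 1) * (a / (l ^ 2)⁻¹) ^ ((n : ℝ) / 2)) ≤
      a ^ ((n : ℝ) / 2) * c ^ (-((n : ℝ) + 1) / 2) * (t / l) ^ (-((n : ℝ) - 1) / 2) := by
  have ht₀ : 0 < t := lt_of_lt_of_le (by positivity) ht
  have hpow : ((l ^ 2)⁻¹) ^ ((n : ℝ) / 2) = (l ^ n)⁻¹ := by
    rw [Real.inv_rpow (by positivity), ← Real.rpow_natCast, ← Real.rpow_mul hl.le,
      ← Real.rpow_natCast]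
    congr 2; push_cast; ring
  calc t / l * (l * t⁻¹ ^ (n + 1) * (a / (l ^ 2)⁻¹) ^ ((n : ℝ) / 2))
      = a ^ ((n : ℝ) / 2) * (t / l)⁻¹ ^ n := by
        rw [Real.div_rpow ha (by positivity), hpow, pow_succ, inv_div, div_pow, inv_pow]
        field_simp
    _ = a ^ ((n : ℝ) / 2) * (t / l) ^ (-((n : ℝ) + 1) / 2) * (t / l) ^ (-((n : ℝ) - 1) / 2) := by
        rw [inv_pow_eq_rpow_mul_rpow (by positivity), mul_assoc]
    _ ≤ _ := by
        gcongr ?_ * ?_ * ?_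
        exact Real.rpow_le_rpow_of_nonpos hc ((le_div_iff₀ hl).2 ht)
          (by linarith [n.cast_nonneg (α := ℝ)])

variable {V : Type*} [NormedAddCommGroup V] [InnerProductSpace ℝ V] [FiniteDimensional ℝ V]
  [MeasurableSpace V] [BorelSpace V] {ζ : ℝ → ℂ} {κ : ℝ}

lemma norm_integral_cexp_mul_le_of_norm_fourier_radialProfile_le {l t m Q : ℝ} (hκ : 0 ≤ κ)
    (hl : κ < l) (hζ : ContDiff ℝ ∞ ζ) (hζ_zero : ∀ s, κ < |s| → ζ s = 0) (hm : 0 < m)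
    (hQ : ∀ w, |t / (2 * l) + 2 * π * w| ≤ m → ‖𝓕 (radialProfile ζ t l) w‖ ≤ Q) (x : V) :
    ‖∫ ξ : V, cexp (I * ((t * ‖ξ‖ + ⟪x, ξ⟫ : ℝ) : ℂ)) * ζ (‖ξ‖ - l)‖ ≤
      (π / m) ^ ((Module.finrank ℝ V : ℝ) / 2) * (∫ w, ‖𝓕 (radialProfile ζ t l) w‖) +
        m / π * (Q * (π / (l ^ 2)⁻¹) ^ ((Module.finrank ℝ V : ℝ) / 2)) := by
  have hl₀ : 0 < l := hκ.trans_lt hl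
  obtain ⟨h, hh⟩ := exists_schwartzMap_coe_eq_radialProfile hκ hl hζ hζ_zero t
  rw [← hh, ← SchwartzMap.fourier_coe] at hQ ⊢
  simp only [cexp_mul_eq_gaussian_mul_radialProfile ζ t l _ (norm_nonneg _), ← hh]
  exact (norm_integral_cexp_mul_comp_sq_norm_le h (by positivity) _ x).trans
    (integral_mul_rpow_div_norm_sub_mul_I_le (fun _ ↦ norm_nonneg _) (𝓕 h).integrable.norm
      (by positivity) hm (by positivity) hQ)

theorem halfwave_kernel_annulus_decay_general {c : ℝ} (hc : 0 < c) (hκ : 0 ≤ κ)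
    (hζ : ContDiff ℝ ∞ ζ) (hζ_zero : ∀ s, κ < |s| → ζ s = 0) :
    ∃ C > 0, ∀ l : ℝ, κ + 1 ≤ l → ∀ t, c * l ≤ t → ∀ x : V,
      ‖∫ ξ : V, cexp (I * ((t * ‖ξ‖ + ⟪x, ξ⟫ : ℝ) : ℂ)) * ζ (‖ξ‖ - l)‖ ≤
        C * (t / l) ^ (-((Module.finrank ℝ V : ℝ) - 1) / 2) := by
  set n := Module.finrank ℝ V
  obtain ⟨D, hD, hL1⟩ := exists_integral_norm_fourier_radialProfile_le hc hκ hζ hζ_zero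
  -- Order `n + 1` compensates both the factor `l` and the Gaussian weight `(π l²)^(n/2)`.
  obtain ⟨C, hC, hdecay⟩ := exists_norm_fourier_radialProfile_le hκ hζ hζ_zero (n + 1)
  set A := D * (π * 8) ^ ((n : ℝ) / 2)
  set B := C / (8 * π) * (π ^ ((n : ℝ) / 2) * c ^ (-((n : ℝ) + 1) / 2))
  refine ⟨A + B + 1, by positivity, fun l hl t ht x ↦ ?_⟩
  have hl₀ : 0 < l := by linarith
  have ht₀ : 0 < t := lt_of_lt_of_le (by positivity) ht
  have hlarge : (π / (t / l / 8)) ^ ((n : ℝ) / 2) *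
      (∫ w, ‖𝓕 (radialProfile ζ t l) w‖) ≤ A * (t / l) ^ (-((n : ℝ) - 1) / 2) := by
    rw [div_div_eq_mul_div]
    exact div_rpow_half_mul_le_of_le_mul_sqrt (by positivity) (by positivity) (hL1 l t hl ht) n
  have hsmall : t / l / 8 / π * (C * l * t⁻¹ ^ (n + 1) *
      (π / (l ^ 2)⁻¹) ^ ((n : ℝ) / 2)) ≤ B * (t / l) ^ (-((n : ℝ) - 1) / 2) :=
    calc _ = C / (8 * π) * (t / l * (l * t⁻¹ ^ (n + 1) *
            (π / (l ^ 2)⁻¹) ^ ((n : ℝ) / 2))) := by field_simp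
      _ ≤ _ := (mul_le_mul_of_nonneg_left
          (div_mul_inv_pow_succ_mul_rpow_half_le Real.pi_pos.le hc hl₀ ht n)
          (by positivity)).trans_eq (mul_assoc _ _ _).symm
  calc _ ≤ _ := norm_integral_cexp_mul_le_of_norm_fourier_radialProfile_le hκ (by linarith) hζ
        hζ_zero (by positivity) (fun w ↦ hdecay l t w hl ht₀) x
    _ ≤ (A + B) * (t / l) ^ (-((n : ℝ) - 1) / 2) := by
        rw [add_mul]; exact add_le_add hlarge hsmall
    _ ≤ _ := mul_le_mul_of_nonneg_right (le_add_of_nonneg_right zero_le_one) (by positivity)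

end KernelDecay

/-- Klainerman–Tataru-type kernel bound: the half-wave kernel with symbol localized to the
annulus `{λ − κ ≤ |ξ| ≤ λ + κ}` satisfies `sup_x |K_{κ,λ}(t,x)| ≤ C (t/λ)^{−(d−1)/2}`
for all `λ ∈ ℕ` with `λ ≥ κ + 1` and all `t ≥ cλ`. -/
theorem halfwave_kernel_annulus_decay (d : ℕ) (hd : 2 ≤ d) (c κ : ℝ) (hc : 0 < c) (hκ : 1 ≤ κ)
    (ζt : ℝ → ℝ) (hζ_smooth : ContDiff ℝ (⊤ : ℕ∞) ζt) (hζ_nonneg : ∀ s, 0 ≤ ζt s)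
    (hζ_one : ∀ s : ℝ, |s| ≤ 3 / 4 * κ → ζt s = 1)
    (hζ_zero : ∀ s : ℝ, κ < |s| → ζt s = 0) :
    ∃ C > 0, ∀ lam : ℕ, κ + 1 ≤ (lam : ℝ) → ∀ t : ℝ, c * lam ≤ t →
      ∀ x : EuclideanSpace ℝ (Fin d),
        ‖∫ ξ : EuclideanSpace ℝ (Fin d),
            Complex.exp (Complex.I * ((t * ‖ξ‖ + ⟪x, ξ⟫ : ℝ) : ℂ)) * ((ζt (‖ξ‖ - lam) : ℝ) : ℂ)‖
          ≤ C * (t / lam) ^ (-((d : ℝ) - 1) / 2) := by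
  obtain ⟨C, hC, bound⟩ := halfwave_kernel_annulus_decay_general hc (zero_le_one.trans hκ)
    (V := EuclideanSpace ℝ (Fin d)) (ζ := fun s ↦ ζt s) (ofRealCLM.contDiff.comp hζ_smooth)
    fun s hs ↦ ofReal_eq_zero.2 (hζ_zero s hs)
  exact ⟨C, hC, fun lam ↦ by simpa only [finrank_euclideanSpace_fin] using bound lam⟩
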